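/- Let μ be a probability measure on [0,∞). Then there exists a probability measure μ₁ on [0,∞) such that for every z in the upper half-plane ℂ⁺, G_{μ₁}(z) = 1/(z·(1 − G_μ(z))); equivalently, in terms of the moment generating function M_μ(z) = ∫ (1 − x·z)⁻¹ dμ(x), one has M_{μ₁}(z) = 1/(1 − z·M_μ(z)). (Note that Im G_μ(z) < 0 for z ∈ ℂ⁺, so G_μ(z) ≠ 1 and the right-hand side is well defined.) -/

import Mathlib

open MeasureTheory

noncomputable section

/-- The Cauchy–Stieltjes transform `G_μ(z) = ∫ (z − x)⁻¹ dμ(x)`. -/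
def cauchyG (μ : Measure ℝ) (z : ℂ) : ℂ := ∫ x, (z - (x : ℂ))⁻¹ ∂μ

open Filter Matrix Topology Unitary
open scoped BoundedContinuousFunction ComplexOrder ENNReal NNReal

/-!
For `μ = ∑ wᵢ δ_{xᵢ}` let `A` be the matrix whose columns are `√w` followed by those of
`diag(√x)`. The Schur complement formula gives `((z - AᴴA)⁻¹)₀₀ = 1 / (z (1 - G_μ(z)))`, so the
spectral measure of `AᴴA ≥ 0` at the first basis vector is the measure sought. Its mean is
`(AᴴA)₀₀ = ∑ wᵢ`, which depends only on the mass of `μ`; hence the measures obtained from a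
discretization of an arbitrary `μ` are tight, and a weak limit point of them works for `μ`.
-/

section CauchyTransform

variable {z : ℂ}

theorem sub_ofReal_ne_zero (hz : z.im ≠ 0) (x : ℝ) : z - (x : ℂ) ≠ 0 := fun h =>
  hz (by simpa using congrArg Complex.im h)

theorem norm_inv_sub_ofReal_le (hz : z.im ≠ 0) (x : ℝ) : ‖(z - (x : ℂ))⁻¹‖ ≤ |z.im|⁻¹ := by
  rw [norm_inv]
  exact inv_anti₀ (abs_pos.2 hz) (by simpa using Complex.abs_im_le_norm (z - (x : ℂ)))

theorem continuous_inv_sub_ofReal (hz : z.im ≠ 0) : Continuous fun x : ℝ => (z - (x : ℂ))⁻¹ :=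
  (by fun_prop : Continuous fun x : ℝ => z - (x : ℂ)).inv₀ (sub_ofReal_ne_zero hz)

theorem integrable_inv_sub_ofReal (μ : Measure ℝ) [IsFiniteMeasure μ] (hz : z.im ≠ 0) :
    Integrable (fun x : ℝ => (z - (x : ℂ))⁻¹) μ :=
  .of_bound (continuous_inv_sub_ofReal hz).aestronglyMeasurable |z.im|⁻¹
    (.of_forall (norm_inv_sub_ofReal_le hz))

theorem im_cauchyG (μ : Measure ℝ) [IsFiniteMeasure μ] (hz : z.im ≠ 0) :
    (cauchyG μ z).im = -z.im * ∫ x : ℝ, (Complex.normSq (z - x))⁻¹ ∂μ := by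
  calc (cauchyG μ z).im = ∫ x : ℝ, ((z - (x : ℂ))⁻¹).im ∂μ :=
        (integral_im (𝕜 := ℂ) (integrable_inv_sub_ofReal μ hz)).symm
    _ = _ := by simp [Complex.inv_im, div_eq_mul_inv, integral_const_mul, integral_neg]

theorem cauchyG_ne_one (μ : Measure ℝ) [IsFiniteMeasure μ] (hz : z.im ≠ 0) :
    cauchyG μ z ≠ 1 := by
  intro hG
  have hzero : ∫ x : ℝ, (Complex.normSq (z - x))⁻¹ ∂μ = 0 := by
    simpa [hG, hz] using im_cauchyG μ hz
  have hint : Integrable (fun x : ℝ => (Complex.normSq (z - x))⁻¹) μ := by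
    have him := (integrable_inv_sub_ofReal μ hz).im.const_mul (-z.im)⁻¹
    simpa [Complex.inv_im, neg_div, div_eq_mul_inv, hz] using him
  rw [integral_eq_zero_iff_of_nonneg (fun x => inv_nonneg.2 (Complex.normSq_nonneg _)) hint]
    at hzero
  have hμ : μ = 0 := ae_eq_bot.1 <| eventually_false_iff_eq_bot.1 <| hzero.mono fun x hx =>
    sub_ofReal_ne_zero hz x (by simpa using hx)
  simp [hμ, cauchyG] at hG

theorem cauchyG_map {Ω : Type*} [MeasurableSpace Ω] {P : Measure Ω} {X : Ω → ℝ}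
    (hX : AEMeasurable X P) (hz : z.im ≠ 0) :
    cauchyG (P.map X) z = ∫ ω, (z - (X ω : ℂ))⁻¹ ∂P :=
  integral_map hX (continuous_inv_sub_ofReal hz).aestronglyMeasurable

theorem tendsto_cauchyG_map_of_ae_tendsto {Ω : Type*} [MeasurableSpace Ω] {P : Measure Ω}
    [IsFiniteMeasure P] {X : ℕ → Ω → ℝ} {Y : Ω → ℝ} (hX : ∀ n, AEMeasurable (X n) P)
    (hlim : ∀ᵐ ω ∂P, Tendsto (X · ω) atTop (𝓝 (Y ω))) (hz : z.im ≠ 0) :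
    Tendsto (fun n => cauchyG (P.map (X n)) z) atTop (𝓝 (cauchyG (P.map Y) z)) := by
  have hY : AEMeasurable Y P := aemeasurable_of_tendsto_metrizable_ae' hX hlim
  simp only [cauchyG_map hY hz, cauchyG_map (hX _) hz]
  have hcont := continuous_inv_sub_ofReal hz
  refine tendsto_integral_of_dominated_convergence (fun _ => |z.im|⁻¹)
    (fun n => (hcont.measurable.comp_aemeasurable (hX n)).aestronglyMeasurable)
    (integrable_const _) (fun n => .of_forall fun ω => norm_inv_sub_ofReal_le hz _) ?_
  filter_upwards [hlim] with ω hω using (hcont.tendsto _).comp hω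

theorem tendsto_cauchyG {ι : Type*} {l : Filter ι} {ν : ι → ProbabilityMeasure ℝ}
    {ν' : ProbabilityMeasure ℝ} (h : Tendsto ν l (𝓝 ν')) (hz : z.im ≠ 0) :
    Tendsto (fun i => cauchyG (ν i) z) l (𝓝 (cauchyG ν' z)) :=
  (ProbabilityMeasure.tendsto_iff_forall_integral_rclike_tendsto ℂ).1 h
    (.ofNormedAddCommGroup _ (continuous_inv_sub_ofReal hz) _ (norm_inv_sub_ofReal_le hz))

theorem cauchyG_map_simpleFunc {Ω : Type*} [MeasurableSpace Ω] (P : Measure Ω)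
    [IsFiniteMeasure P] (X : SimpleFunc Ω ℝ≥0) (hz : z.im ≠ 0) :
    cauchyG (P.map fun ω => (X ω : ℝ)) z =
      ∑ x : X.range, (P.real (X ⁻¹' {↑x}) : ℂ) * (z - ((x : ℝ≥0) : ℝ))⁻¹ := by
  have hrange : ∀ᵐ x ∂P.map X, x ∈ (X.range : Set ℝ≥0) := by
    refine (ae_map_iff X.measurable.aemeasurable X.range.measurableSet).2 ?_
    simp
  have hcont : Continuous fun x : ℝ≥0 => (z - ((x : ℝ) : ℂ))⁻¹ :=
    (continuous_inv_sub_ofReal hz).comp NNReal.continuous_coe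
  have hint : Integrable (fun x : ℝ≥0 => (z - ((x : ℝ) : ℂ))⁻¹) (P.map X) :=
    .of_bound hcont.aestronglyMeasurable |z.im|⁻¹ (.of_forall fun x => norm_inv_sub_ofReal_le hz x)
  calc cauchyG (P.map fun ω => (X ω : ℝ)) z = ∫ ω, (z - ((X ω : ℝ) : ℂ))⁻¹ ∂P :=
        cauchyG_map (by fun_prop) hz
    _ = ∫ x, (z - ((x : ℝ) : ℂ))⁻¹ ∂P.map X :=
        (integral_map X.aemeasurable hcont.aestronglyMeasurable).symm
    _ = ∫ x in (X.range : Set ℝ≥0), (z - ((x : ℝ) : ℂ))⁻¹ ∂P.map X := by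
        rw [Measure.restrict_eq_self_of_ae_mem hrange]
    _ = ∑ x ∈ X.range, (P.real (X ⁻¹' {x}) : ℂ) * (z - (x : ℝ))⁻¹ := by
        rw [setIntegral_finset _ hint.integrableOn]
        simp [map_measureReal_apply X.measurable (measurableSet_singleton _)]
    _ = _ := (Finset.sum_coe_sort X.range _).symm

end CauchyTransform

theorem ae_nonneg_iff_measure_Iio_zero {μ : Measure ℝ} :
    (∀ᵐ t ∂μ, 0 ≤ t) ↔ μ (Set.Iio 0) = 0 := by
  simp [ae_iff, Set.Iio]

section SpectralMeasure

variable {n : Type*} [Fintype n] [DecidableEq n] {T : Matrix n n ℂ}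

/-- The spectral measure of a Hermitian matrix `T` at the `i`-th standard basis vector: the measure
`ν` on `ℝ` with `∫ f dν = f(T)ᵢᵢ`. -/
def spectralMeasure (hT : T.IsHermitian) (i : n) : Measure ℝ :=
  ∑ k, ‖(hT.eigenvectorUnitary : Matrix n n ℂ) i k‖₊ ^ 2 • Measure.dirac (hT.eigenvalues k)

theorem integrable_spectralMeasure (hT : T.IsHermitian) (i : n) (f : ℝ → ℂ) :
    Integrable f (spectralMeasure hT i) :=
  integrable_finsetSum_measure.2 fun _ _ =>
    (integrable_dirac enorm_lt_top).smul_measure_nnreal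

theorem integral_spectralMeasure (hT : T.IsHermitian) (i : n) (f : ℝ → ℂ) :
    ∫ t, f t ∂spectralMeasure hT i =
      conjStarAlgAut ℂ _ hT.eigenvectorUnitary (diagonal (f ∘ hT.eigenvalues)) i i := by
  unfold spectralMeasure
  rw [integral_finsetSum_measure fun _ _ => (integrable_dirac enorm_lt_top).smul_measure_nnreal,
    conjStarAlgAut_apply, Matrix.mul_apply]
  refine Finset.sum_congr rfl fun k _ => ?_
  simp only [integral_smul_nnreal_measure, integral_dirac, mul_diagonal, Matrix.star_apply,
    NNReal.smul_def, Complex.real_smul, NNReal.coe_pow, coe_nnnorm, Complex.ofReal_pow,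
    Function.comp_apply]
  rw [mul_right_comm, RCLike.star_def, RCLike.mul_conj]
  rfl

theorem isProbabilityMeasure_spectralMeasure (hT : T.IsHermitian) (i : n) :
    IsProbabilityMeasure (spectralMeasure hT i) := by
  have h := integral_spectralMeasure hT i 1
  rw [Pi.one_comp, diagonal_one', map_one, one_apply_eq] at h
  have hreal : (spectralMeasure hT i).real Set.univ = 1 := by
    exact_mod_cast (by simpa using h : ((spectralMeasure hT i).real Set.univ : ℂ) = 1)
  exact isProbabilityMeasure_iff_real.2 hreal

theorem integral_id_spectralMeasure (hT : T.IsHermitian) (i : n) :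
    ∫ t, (t : ℂ) ∂spectralMeasure hT i = T i i := by
  rw [integral_spectralMeasure]
  exact congrFun₂ hT.spectral_theorem.symm i i

theorem cauchyG_spectralMeasure (hT : T.IsHermitian) {i : n} {z : ℂ} (hz : z.im ≠ 0) {y : n → ℂ}
    (hy : z • y - T *ᵥ y = Pi.single i 1) : cauchyG (spectralMeasure hT i) z = y i := by
  let φ := conjStarAlgAut ℂ (Matrix n n ℂ) hT.eigenvectorUnitary
  let R := φ (diagonal fun k => (z - hT.eigenvalues k)⁻¹)
  have hR : R * (z • 1 - T) = 1 := by
    have hT' : z • 1 - T = φ (diagonal fun k => z - hT.eigenvalues k) := by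
      rw [← diagonal_sub, map_sub, ← smul_one_eq_diagonal, map_smul, map_one]
      congr 1
      exact hT.spectral_theorem
    rw [hT', ← map_mul, diagonal_mul_diagonal]
    simp [inv_mul_cancel₀ (sub_ofReal_ne_zero hz _)]
  calc cauchyG (spectralMeasure hT i) z = R i i := integral_spectralMeasure hT i _
    _ = (R *ᵥ Pi.single i 1) i := by rw [mulVec_single_one, col_apply]
    _ = (R *ᵥ ((z • 1 - T) *ᵥ y)) i := by rw [← hy, sub_mulVec, smul_mulVec, one_mulVec]
    _ = y i := by rw [mulVec_mulVec, hR, one_mulVec]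

theorem spectralMeasure_Iio_zero (hT : T.PosSemidef) (i : n) :
    spectralMeasure hT.isHermitian i (Set.Iio 0) = 0 := by
  simp [spectralMeasure, Measure.finsetSum_apply, hT.eigenvalues_nonneg]

theorem lintegral_enorm_spectralMeasure (hT : T.PosSemidef) (i : n) :
    ∫⁻ t, ‖t‖ₑ ∂spectralMeasure hT.isHermitian i = ENNReal.ofReal (T i i).re := by
  have hnonneg : ∀ᵐ t ∂spectralMeasure hT.isHermitian i, 0 ≤ t :=
    ae_nonneg_iff_measure_Iio_zero.2 (spectralMeasure_Iio_zero hT i)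
  have hint : Integrable (fun t : ℝ => t) (spectralMeasure hT.isHermitian i) :=
    (integrable_spectralMeasure hT.isHermitian i (fun t => (t : ℂ))).re
  calc ∫⁻ t, ‖t‖ₑ ∂spectralMeasure hT.isHermitian i
      = ENNReal.ofReal (∫ t, ‖t‖ ∂spectralMeasure hT.isHermitian i) :=
        (ofReal_integral_norm_eq_lintegral_enorm hint).symm
    _ = ENNReal.ofReal (∫ t, t ∂spectralMeasure hT.isHermitian i) := by
        rw [integral_congr_ae (hnonneg.mono fun t ht => Real.norm_of_nonneg ht)]
    _ = ENNReal.ofReal (T i i).re := by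
        rw [← integral_id_spectralMeasure hT.isHermitian i, integral_complex_ofReal,
          Complex.ofReal_re]

end SpectralMeasure

section ArrowMatrix

variable {ι : Type*} [Fintype ι] [DecidableEq ι]

/-- The matrix with columns `√w` and those of `diag(√x)`, the first of them having index `inl ()`.
Its Gram matrix is supported on an arrow: the diagonal and the first row and column. -/
def arrowFactor (w x : ι → ℝ≥0) : Matrix ι (Unit ⊕ ι) ℂ :=
  fromCols (replicateCol Unit fun i => (√(w i : ℝ) : ℂ)) (diagonal fun i => (√(x i : ℝ) : ℂ))

theorem ofReal_sqrt_mul_self (r : ℝ≥0) : (√(r : ℝ) : ℂ) * √(r : ℝ) = (r : ℝ) := by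
  rw [← Complex.ofReal_mul, Real.mul_self_sqrt r.coe_nonneg]

theorem lintegral_enorm_spectralMeasure_arrowFactor_gram (w x : ι → ℝ≥0) :
    ∫⁻ t, ‖t‖ₑ ∂spectralMeasure (isHermitian_conjTranspose_mul_self (arrowFactor w x)) (.inl ()) =
      ∑ i, (w i : ℝ≥0∞) := by
  have hentry : ((arrowFactor w x)ᴴ * arrowFactor w x) (.inl ()) (.inl ()) =
      ((∑ i, w i : ℝ≥0) : ℝ) := by
    simp [arrowFactor, Matrix.mul_apply, ofReal_sqrt_mul_self]
  rw [lintegral_enorm_spectralMeasure (posSemidef_conjTranspose_mul_self _), hentry,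
    Complex.ofReal_re, ENNReal.ofReal_coe_nnreal, ENNReal.ofNNReal_finsetSum]

theorem cauchyG_spectralMeasure_arrowFactor_gram (w x : ι → ℝ≥0) {z : ℂ} (hz : z.im ≠ 0)
    (hG : ∑ i, (w i : ℂ) * (z - (x i : ℝ))⁻¹ ≠ 1) :
    cauchyG (spectralMeasure (isHermitian_conjTranspose_mul_self (arrowFactor w x)) (.inl ())) z =
      1 / (z * (1 - ∑ i, (w i : ℂ) * (z - (x i : ℝ))⁻¹)) := by
  set G := ∑ i, (w i : ℂ) * (z - (x i : ℝ))⁻¹ with hGdef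
  set A := arrowFactor w x with hA
  have hz0 : z ≠ 0 := by rintro rfl; simp at hz
  have hG1 : 1 - G ≠ 0 := sub_ne_zero.2 hG.symm
  let u : ι → ℂ := fun i => √(w i : ℝ) * (z - (x i : ℝ))⁻¹ / (1 - G)
  let y : Unit ⊕ ι → ℂ := Sum.elim (fun _ => 1 / (z * (1 - G))) fun i => √(x i : ℝ) * u i / z
  have hAy : A *ᵥ y = u := by
    funext i
    have hzx : z - (x i : ℝ) ≠ 0 := sub_ofReal_ne_zero hz _
    calc (A *ᵥ y) i = √(w i : ℝ) * (1 / (z * (1 - G))) + √(x i : ℝ) * (√(x i : ℝ) * u i / z) := by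
          simp [A, arrowFactor, y, mulVec, dotProduct, diagonal_apply]
      _ = √(w i : ℝ) / (z * (1 - G)) + (x i : ℝ) * u i / z := by
          rw [← ofReal_sqrt_mul_self (x i)]; ring
      _ = u i := by simp only [u]; field_simp; ring
  have hAu : Aᴴ *ᵥ u = z • y - Pi.single (.inl ()) 1 := by
    rw [hA, arrowFactor, conjTranspose_fromCols_eq_fromRows_conjTranspose, fromRows_mulVec]
    ext (_ | i)
    · calc _ = ∑ i, √(w i : ℝ) * u i := by simp [mulVec, dotProduct]
        _ = G / (1 - G) := by
          simp only [u, hGdef, Finset.sum_div, ← mul_div_assoc, ← mul_assoc, ofReal_sqrt_mul_self]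
        _ = z * (1 / (z * (1 - G))) - 1 := by field_simp; ring
        _ = _ := by simp [y]
    · calc _ = √(x i : ℝ) * u i := by simp [mulVec_diagonal, diagonal_conjTranspose]
        _ = z * (√(x i : ℝ) * u i / z) := by field_simp
        _ = _ := by simp [y]
  refine cauchyG_spectralMeasure _ hz (y := y) ?_
  rw [← mulVec_mulVec, hAy, hAu, sub_sub_cancel]

end ArrowMatrix

theorem isTightMeasureSet_of_lintegral_enorm_le {E : Type*} [NormedAddCommGroup E] [ProperSpace E]
    [MeasurableSpace E] [OpensMeasurableSpace E] {S : Set (Measure E)} {C : ℝ≥0∞} (hC : C ≠ ∞)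
    (hS : ∀ ν ∈ S, ∫⁻ t, ‖t‖ₑ ∂ν ≤ C) : IsTightMeasureSet S := by
  refine isTightMeasureSet_of_tendsto_measure_norm_gt ?_
  have hbound : ∀ᶠ r : ℝ in atTop, ⨆ ν ∈ S, ν {t | r < ‖t‖} ≤ C / ENNReal.ofReal r := by
    filter_upwards [eventually_gt_atTop 0] with r hr
    refine iSup₂_le fun ν hν => ?_
    calc ν {t | r < ‖t‖} ≤ ν {t | ENNReal.ofReal r ≤ ‖t‖ₑ} :=
          measure_mono fun t (ht : r < ‖t‖) =>
            (ENNReal.ofReal_le_ofReal ht.le).trans_eq (ofReal_norm t)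
      _ ≤ (∫⁻ t, ‖t‖ₑ ∂ν) / ENNReal.ofReal r :=
          meas_ge_le_lintegral_div (by fun_prop) (by simpa using hr) ENNReal.ofReal_ne_top
      _ ≤ C / ENNReal.ofReal r := by gcongr; exact hS ν hν
  have hlim : Tendsto (fun r : ℝ => C / ENNReal.ofReal r) atTop (𝓝 0) := by
    simpa using ENNReal.Tendsto.const_div ENNReal.tendsto_ofReal_atTop (.inr hC)
  exact tendsto_of_tendsto_of_tendsto_of_le_of_le' tendsto_const_nhds hlim
    (.of_forall fun _ => zero_le) hbound

/-- `ν` is a reciprocal transform of `μ` if `G_ν(z) = 1 / (z (1 - G_μ(z)))` on the upper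
half-plane. -/
def IsReciprocalTransform (μ ν : Measure ℝ) : Prop :=
  ∀ z : ℂ, 0 < z.im → cauchyG ν z = 1 / (z * (1 - cauchyG μ z))

theorem IsReciprocalTransform.of_tendsto {ι : Type*} {l : Filter ι} [l.NeBot]
    {μ ν : ι → Measure ℝ} {μ' ν' : Measure ℝ} [IsFiniteMeasure μ']
    (h : ∀ i, IsReciprocalTransform (μ i) (ν i))
    (hμ : ∀ z : ℂ, 0 < z.im → Tendsto (fun i => cauchyG (μ i) z) l (𝓝 (cauchyG μ' z)))
    (hν : ∀ z : ℂ, 0 < z.im → Tendsto (fun i => cauchyG (ν i) z) l (𝓝 (cauchyG ν' z))) :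
    IsReciprocalTransform μ' ν' := by
  intro z hz
  have hne : z * (1 - cauchyG μ' z) ≠ 0 :=
    mul_ne_zero (by rintro rfl; simp at hz) (sub_ne_zero.2 (cauchyG_ne_one μ' hz.ne').symm)
  refine tendsto_nhds_unique (hν z hz) ?_
  simp only [h _ z hz]
  exact tendsto_const_nhds.div (((hμ z hz).const_sub 1).const_mul z) hne

theorem exists_isReciprocalTransform_map_simpleFunc {Ω : Type*} [MeasurableSpace Ω]
    (P : Measure Ω) [IsFiniteMeasure P] (X : SimpleFunc Ω ℝ≥0) :
    ∃ ν : ProbabilityMeasure ℝ, (ν : Measure ℝ) (Set.Iio 0) = 0 ∧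
      ∫⁻ t, ‖t‖ₑ ∂(ν : Measure ℝ) = P Set.univ ∧
      IsReciprocalTransform (P.map fun ω => (X ω : ℝ)) ν := by
  let w : X.range → ℝ≥0 := fun x => (P (X ⁻¹' {↑x})).toNNReal
  let A := arrowFactor w (↑)
  have hA : (Aᴴ * A).PosSemidef := posSemidef_conjTranspose_mul_self A
  refine ⟨⟨spectralMeasure hA.isHermitian (.inl ()), isProbabilityMeasure_spectralMeasure _ _⟩,
    spectralMeasure_Iio_zero hA _, ?_, fun z hz => ?_⟩
  · calc _ = ∑ x : X.range, (w x : ℝ≥0∞) := lintegral_enorm_spectralMeasure_arrowFactor_gram _ _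
      _ = ∑ x : X.range, P (X ⁻¹' {↑x}) := by simp [w]
      _ = P Set.univ := by
        rw [Finset.sum_coe_sort X.range fun x => P (X ⁻¹' {x}),
          X.sum_range_measure_preimage_singleton]
  · have hG := cauchyG_map_simpleFunc P X hz.ne'
    have hG1 := cauchyG_ne_one (P.map fun ω => (X ω : ℝ)) hz.ne'
    rw [hG] at hG1 ⊢
    exact cauchyG_spectralMeasure_arrowFactor_gram w (↑) hz.ne' hG1

theorem exists_simpleFunc_ae_tendsto_of_Iio_zero {μ : Measure ℝ} (hsupp : μ (Set.Iio (0 : ℝ)) = 0) :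
    ∃ X : ℕ → SimpleFunc ℝ ℝ≥0, ∀ᵐ t ∂μ, Tendsto (fun n => (X n t : ℝ)) atTop (𝓝 t) := by
  have hmeas : StronglyMeasurable Real.toNNReal := measurable_real_toNNReal.stronglyMeasurable
  refine ⟨hmeas.approx, ?_⟩
  filter_upwards [ae_nonneg_iff_measure_Iio_zero.2 hsupp] with t ht
  simpa [ht] using NNReal.tendsto_coe.2 (hmeas.tendsto_approx t)

theorem exists_measure_reciprocal_transform_general (μ : Measure ℝ) [IsFiniteMeasure μ]
    (hsupp : μ (Set.Iio (0 : ℝ)) = 0) :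
    ∃ μ₁ : Measure ℝ, IsProbabilityMeasure μ₁ ∧ μ₁ (Set.Iio (0 : ℝ)) = 0 ∧
      ∀ z : ℂ, 0 < z.im →
        cauchyG μ₁ z = 1 / (z * (1 - cauchyG μ z)) := by
  obtain ⟨X, hX⟩ := exists_simpleFunc_ae_tendsto_of_Iio_zero hsupp
  choose ν hν_supp hν_mean hν using fun n => exists_isReciprocalTransform_map_simpleFunc μ (X n)
  have hcompact : IsCompact (closure (Set.range ν)) := by
    refine isCompact_closure_of_isTightMeasureSet
      (isTightMeasureSet_of_lintegral_enorm_le (measure_ne_top μ Set.univ) ?_)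
    rintro _ ⟨_, ⟨n, rfl⟩, rfl⟩
    exact (hν_mean n).le
  obtain ⟨ν', -, φ, hφ, hlim⟩ :=
    hcompact.tendsto_subseq fun n => subset_closure (Set.mem_range_self n)
  refine ⟨ν', inferInstance, ?_, IsReciprocalTransform.of_tendsto (fun n => hν (φ n))
    (fun z hz => ?_) fun z hz => tendsto_cauchyG hlim hz.ne'⟩
  · simpa [hν_supp] using
      ProbabilityMeasure.le_liminf_measure_open_of_tendsto hlim (isOpen_Iio (a := (0 : ℝ)))
  · have hlim_cauchyG := tendsto_cauchyG_map_of_ae_tendsto (fun n => by fun_prop) hX hz.ne'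
    rw [Measure.map_id'] at hlim_cauchyG
    exact hlim_cauchyG.comp hφ.tendsto_atTop

/-- For any probability measure `μ` on `[0,∞)` there exists a probability measure `μ₁`
on `[0,∞)` with `G_{μ₁}(z) = 1/(z(1 − G_μ(z)))` on the upper half-plane; equivalently
`M_{μ₁}(z) = 1/(1 − z·M_μ(z))`. -/
theorem exists_measure_reciprocal_transform (μ : Measure ℝ)
    (hμ : IsProbabilityMeasure μ) (hsupp : μ (Set.Iio (0 : ℝ)) = 0) :
    ∃ μ₁ : Measure ℝ, IsProbabilityMeasure μ₁ ∧ μ₁ (Set.Iio (0 : ℝ)) = 0 ∧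
      ∀ z : ℂ, 0 < z.im →
        cauchyG μ₁ z = 1 / (z * (1 - cauchyG μ z)) :=
  exists_measure_reciprocal_transform_general μ hsupp
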